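/- arXiv:1208.0973 — 2 statements merged into one kernel-verified Lean document; each statement's English description precedes it below -/
import Mathlib

section
/- Let a < b be real numbers. For a subset S of the closed interval [a,b] of ℝ, the following are equivalent: (i) S is inductive; (ii) S = [a,b]. -/
/-- Real Induction: a subset `S` of `[a,b]` is inductive iff `S = [a,b]`. -/
theorem real_induction (a b : ℝ) (hab : a < b) (S : Set ℝ) (hS : S ⊆ Set.Icc a b) :
    (a ∈ S ∧
     (∀ x : ℝ, a ≤ x → x < b → x ∈ S → ∃ y : ℝ, x < y ∧ Set.Icc x y ⊆ S) ∧
     (∀ x : ℝ, a < x → x ≤ b → Set.Ico a x ⊆ S → x ∈ S)) ↔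
    S = Set.Icc a b := by
  constructor
  · rintro ⟨h1, h2, h3⟩
    refine Set.Subset.antisymm hS ?_
    intro z hz
    by_contra hzS
    have hne : (Set.Icc a b \ S).Nonempty := ⟨z, hz, hzS⟩
    have hbd : BddBelow (Set.Icc a b \ S) := ⟨a, fun t ht => ht.1.1⟩
    obtain ⟨m, hm⟩ : ∃ m, IsGLB (Set.Icc a b \ S) m := ⟨_, isGLB_csInf hne hbd⟩
    have ham : a ≤ m := hm.2 fun t ht => ht.1.1
    have hmz : m ≤ z := hm.1 ⟨hz, hzS⟩
    have hmb : m ≤ b := hmz.trans hz.2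
    have hsub : Set.Ico a m ⊆ S := by
      intro t ht
      by_contra htS
      exact absurd (hm.1 ⟨⟨ht.1, ht.2.le.trans hmb⟩, htS⟩) (not_le.2 ht.2)
    have hmS : m ∈ S := by
      rcases ham.eq_or_lt with h | h
      · exact h ▸ h1
      · exact h3 m h hmb hsub
    have hmlt : m < b := by
      refine lt_of_le_of_ne hmb fun h => hzS ?_
      have : z = m := le_antisymm (h ▸ hz.2) hmz
      exact this ▸ hmS
    obtain ⟨y, hy, hyS⟩ := h2 m ham hmlt hmS
    have hle : y ≤ m := hm.2 fun t ht => by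
      by_contra hlt
      exact ht.2 (hyS ⟨hm.1 ht, (not_le.1 hlt).le⟩)
    exact absurd hle (not_le.2 hy)
  · rintro rfl
    refine ⟨⟨le_rfl, hab.le⟩, fun x hx hxb _ => ⟨b, hxb, Set.Icc_subset_Icc_left hx⟩,
      fun x hx hxb _ => ⟨hx.le, hxb⟩⟩
end

section
/- For a linearly ordered set X, the following are equivalent: (i) X is Dedekind complete; (ii) the only inductive subset of X is X itself. -/
/-- A linearly ordered set is Dedekind complete iff its only inductive subset is the
whole set. A subset `S` is inductive if: (IS1) some `a` has `(-∞, a] ⊆ S`; (IS2) every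
`x ∈ S` is either the top element or admits `y > x` with `[x,y] ⊆ S`; (IS3) if all
`z < x` lie in `S` then `x ∈ S`. -/
theorem linearly_ordered_induction {X : Type*} [LinearOrder X] :
    (∀ S : Set X, S.Nonempty → BddAbove S → ∃ u : X, IsLUB S u) ↔
    (∀ S : Set X,
      (∃ a : X, ∀ x : X, x ≤ a → x ∈ S) →
      (∀ x ∈ S, (∀ z : X, z ≤ x) ∨ ∃ y : X, x < y ∧ Set.Icc x y ⊆ S) →
      (∀ x : X, (∀ z : X, z < x → z ∈ S) → x ∈ S) →
      S = Set.univ) := by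
  constructor
  · rintro h S ⟨a, ha⟩ h2 h3
    by_contra hne
    obtain ⟨b, hb⟩ := (Set.ne_univ_iff_exists_notMem S).1 hne
    obtain ⟨u, hu⟩ := h {t | ∀ x ≤ t, x ∈ S} ⟨a, ha⟩
      ⟨b, fun t ht => le_of_not_ge fun hbt => hb (ht b hbt)⟩
    have hlt : ∀ z, z < u → z ∈ S := by
      intro z hz
      obtain ⟨t, ht, hzt⟩ := (lt_isLUB_iff hu).1 hz
      exact ht z hzt.le
    have huS := h3 u hlt
    rcases h2 u huS with htop | ⟨y, huy, hy⟩
    · rcases (htop b).lt_or_eq with hbu | rfl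
      · exact hb (hlt b hbu)
      · exact hb huS
    · suffices hyT : y ∈ {t | ∀ x ≤ t, x ∈ S} from absurd (hu.1 hyT) (not_le.2 huy)
      intro x hx
      rcases lt_or_ge x u with hxu | hxu
      · exact hlt x hxu
      · exact hy ⟨hxu, hx⟩
  · intro h T ⟨a, ha⟩ ⟨b, hb⟩
    by_contra hno
    have hmem : ∀ t ∈ T, t ∉ upperBounds T := fun t ht htu =>
      hno ⟨t, htu, fun c hc => hc ht⟩
    have huniv := h (upperBounds T)ᶜ
      ⟨a, fun x hx hxu => hmem a ha fun t ht => (hxu ht).trans hx⟩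
      (by
        intro x hx
        right
        have hx' : ¬ ∀ t ∈ T, t ≤ x := hx
        push Not at hx'
        obtain ⟨t, ht, hxt⟩ := hx'
        exact ⟨t, hxt, fun y hy hyu => hmem t ht fun s hs => (hyu hs).trans hy.2⟩)
      (fun x hx hxu => hno ⟨x, hxu, fun c hc => le_of_not_gt fun hcx => hx c hcx hc⟩)
    have : b ∈ (upperBounds T)ᶜ := huniv ▸ Set.mem_univ b
    exact this hb
end
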